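/- Let O ⊂ [0,1] be the set of maximizers of 𝑝̃ on [0,1] and, for m ∈ [0,1], let d(m) denote the distance from m to O. Then for every δ > 0 there exist η > 0 and a constant K such that for all N ≥ 1, ℙ(d(m(σ)) ≥ δ) ≤ K·e^{−Nη}, where σ is drawn from the weighted Curie–Weiss Gibbs measure. -/

import Mathlib

open Real Finset MeasureTheory

noncomputable section

/-- Dimer configurations (matchings of the complete graph on `Fin N`), encoded as
involutions of `Fin N`: fixed points are monomers, 2-cycles are dimers. -/
abbrev Dimer (N : ℕ) := {f : Fin N → Fin N // ∀ i, f (f i) = i}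

/-- The set of monomers (dimer-free vertices) of a dimer configuration. -/
def monomers {N : ℕ} (D : Dimer N) : Finset (Fin N) :=
  Finset.univ.filter fun i => D.1 i = i

/-- Monomer density `m(D) = |𝓜(D)|/N`. -/
def mDim {N : ℕ} (D : Dimer N) : ℝ := ((monomers D).card : ℝ) / N

/-- The parameter `b = (log N)/2 + h - J`. -/
def bIMD (N : ℕ) (J h : ℝ) : ℝ := Real.log N / 2 + h - J

/-- The Gibbs weight `exp(-H(D)) = exp(N (a m(D)^2 + b m(D)))` with `a = J`. -/
def wDim (N : ℕ) (J h : ℝ) (D : Dimer N) : ℝ :=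
  Real.exp (N * (J * mDim D ^ 2 + bIMD N J h * mDim D))

/-- The probability of an event `A` under the IMD Gibbs measure. -/
def probDim (N : ℕ) (J h : ℝ) (A : Dimer N → Prop) : ℝ :=
  (∑ D : Dimer N, Set.indicator {D | A D} (wDim N J h) D) / ∑ D : Dimer N, wDim N J h D

/-- The conditional probability `ℙ(A | B)` under the IMD Gibbs measure. -/
def condProbDim (N : ℕ) (J h : ℝ) (A B : Dimer N → Prop) : ℝ :=
  (∑ D : Dimer N, Set.indicator {D | A D ∧ B D} (wDim N J h) D) /
    ∑ D : Dimer N, Set.indicator {D | B D} (wDim N J h) D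

/-- `g(x) = (√(e^{4x} + 4 e^{2x}) - e^{2x})/2`. -/
def gFun (x : ℝ) : ℝ := (Real.sqrt (Real.exp (4*x) + 4 * Real.exp (2*x)) - Real.exp (2*x)) / 2

/-- `τ(x) = (2x-1)J + h`. -/
def tauFun (J h x : ℝ) : ℝ := (2*x - 1) * J + h

/-- `𝑝̃(m) = -J m² - (1 - g(τ(m)) + log(1 - g(τ(m))))/2`. -/
def ptilde (J h m : ℝ) : ℝ :=
  -J * m^2 - (1 - gFun (tauFun J h m) + Real.log (1 - gFun (tauFun J h m))) / 2

/-- The CDF of a centered Gaussian with variance `v`, evaluated at `z`. -/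
def gaussCDF (v : ℝ) (z : ℝ) : ℝ :=
  (ProbabilityTheory.gaussianReal 0 (Real.toNNReal v) (Set.Iic z)).toReal

/-- Spin configurations `Σ = {0,1}^N`. -/
abbrev Config (N : ℕ) := Fin N → Bool

/-- `𝓐(σ) = {i : σ_i = 1}`. -/
def ASet {N : ℕ} (σ : Config N) : Finset (Fin N) := Finset.univ.filter fun i => σ i = true

/-- `M(σ) = ∑ σ_i`. -/
def Msum {N : ℕ} (σ : Config N) : ℕ := (ASet σ).card

/-- Magnetization `m(σ) = M(σ)/N`. -/
def mConf {N : ℕ} (σ : Config N) : ℝ := (Msum σ : ℝ) / N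

/-- `D(σ)`: the number of dimer configurations `D` with `𝓜(D) = 𝓐(σ)`. -/
def Dcount (N : ℕ) (σ : Config N) : ℕ :=
  (Finset.univ.filter fun D : Dimer N => monomers D = ASet σ).card

/-- The weight `D(σ) exp(-H(σ))` of the weighted Curie–Weiss model. -/
def wConf (N : ℕ) (J h : ℝ) (σ : Config N) : ℝ :=
  (Dcount N σ : ℝ) * Real.exp (N * (J * mConf σ ^ 2 + bIMD N J h * mConf σ))

/-- The probability of an event `A` under the weighted Curie–Weiss Gibbs measure. -/
def probConf (N : ℕ) (J h : ℝ) (A : Config N → Prop) : ℝ :=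
  (∑ σ : Config N, Set.indicator {σ | A σ} (wConf N J h) σ) / ∑ σ : Config N, wConf N J h σ

/-- Expectation under the weighted Curie–Weiss Gibbs measure. -/
def EConf (N : ℕ) (J h : ℝ) (f : Config N → ℝ) : ℝ :=
  (∑ σ : Config N, wConf N J h σ * f σ) / ∑ σ : Config N, wConf N J h σ

/-- `L₁(m) = 2(1-m)(m² - (1-m)e^{2τ(m)})/((1-m) + e^{2τ(m)})`. -/
def Lone (J h m : ℝ) : ℝ :=
  2*(1-m)*(m^2 - (1-m)*Real.exp (2 * tauFun J h m)) / ((1-m) + Real.exp (2 * tauFun J h m))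

/-- `L₂(m) = 4(1-m)(m² + (1-m)e^{2τ(m)})/((1-m) + e^{2τ(m)})`. -/
def Ltwo (J h m : ℝ) : ℝ :=
  4*(1-m)*(m^2 + (1-m)*Real.exp (2 * tauFun J h m)) / ((1-m) + Real.exp (2 * tauFun J h m))

/-- The configuration obtained from `σ` by setting the spins at `u, v` to `s, t`. -/
def upd {N : ℕ} (σ : Config N) (u v : Fin N) (s t : Bool) : Config N :=
  fun i => if i = u then s else if i = v then t else σ i

/-- The edges of the complete graph, enumerated as ordered pairs `u < v`. -/
def cEdges (N : ℕ) : Finset (Fin N × Fin N) := Finset.univ.filter fun p => p.1 < p.2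

/-- The probability of resampling the pair of spins at `(u,v)` to `(s,t)`:
the conditional distribution of `(σ_u, σ_v)` given `(σ_i)_{i ≠ u,v}`. -/
def qCond (N : ℕ) (J h : ℝ) (σ : Config N) (u v : Fin N) (s t : Bool) : ℝ :=
  wConf N J h (upd σ u v s t) / ∑ st : Bool × Bool, wConf N J h (upd σ u v st.1 st.2)

/-- `E[F(σ, σ') | σ]` for the exchangeable pair `(σ, σ')` obtained by resampling the
spins at a uniformly chosen edge. -/
def condE2 (N : ℕ) (J h : ℝ) (F : Config N → Config N → ℝ) (σ : Config N) : ℝ :=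
  ((cEdges N).card : ℝ)⁻¹ * ∑ p ∈ cEdges N, ∑ st : Bool × Bool,
    qCond N J h σ p.1 p.2 st.1 st.2 * F σ (upd σ p.1 p.2 st.1 st.2)

/-- The weight of the Gibbs measure conditioned on the event `S`. -/
def wCond (N : ℕ) (J h : ℝ) (S : Config N → Prop) (σ : Config N) : ℝ :=
  Set.indicator {σ | S σ} (wConf N J h) σ

/-- `ℙ_ℓ(A) = ℙ(A | S)`, probability under the conditioned Gibbs measure. -/
def probL (N : ℕ) (J h : ℝ) (S A : Config N → Prop) : ℝ :=
  (∑ σ : Config N, Set.indicator {σ | A σ} (wCond N J h S) σ) / ∑ σ : Config N, wCond N J h S σ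

/-- Expectation under the conditioned Gibbs measure `ℙ(·|S)`. -/
def EL (N : ℕ) (J h : ℝ) (S : Config N → Prop) (f : Config N → ℝ) : ℝ :=
  (∑ σ : Config N, wCond N J h S σ * f σ) / ∑ σ : Config N, wCond N J h S σ

/-- Resampling probability for the conditioned measure `ℙ(·|S)`. -/
def qCondL (N : ℕ) (J h : ℝ) (S : Config N → Prop) (σ : Config N) (u v : Fin N)
    (s t : Bool) : ℝ :=
  wCond N J h S (upd σ u v s t) / ∑ st : Bool × Bool, wCond N J h S (upd σ u v st.1 st.2)

/-- `E_ℓ[F(σ, σ') | σ]` for the exchangeable pair under the conditioned measure. -/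
def condE2L (N : ℕ) (J h : ℝ) (S : Config N → Prop) (F : Config N → Config N → ℝ)
    (σ : Config N) : ℝ :=
  ((cEdges N).card : ℝ)⁻¹ * ∑ p ∈ cEdges N, ∑ st : Bool × Bool,
    qCondL N J h S σ p.1 p.2 st.1 st.2 * F σ (upd σ p.1 p.2 st.1 st.2)

/-- The maximizer set `O` of `𝑝̃` on `[0,1]`. -/
def maxSet (J h : ℝ) : Set ℝ :=
  {x | x ∈ Set.Icc (0:ℝ) 1 ∧ ∀ y ∈ Set.Icc (0:ℝ) 1, ptilde J h y ≤ ptilde J h x}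

end

/-!
Forming the generating polynomial of matchings vertex by vertex gives the recurrence
`Z (n + 2) = x Z (n + 1) + (n + 1) Z n` for the partition function at monomer activity `x`. Cauchy's
formula for the generating function `exp (x t + t² / 2)` suggests the value of
`n! t⁻ⁿ exp (x t + t² / 2)` at its minimum over `t > 0` as an approximation of `Z n`, and the
recurrence shows by induction that this is an upper bound and is sharp up to a factor of order
`n³`. At activity `√N exp (τ m)` it equals, up to a factor depending only on `N`, the exponential
of `N (𝑝̃(m) + J m²)`.

Writing `J m² = J (2 m y - y²) + J (m - y)²` turns the Gibbs weights into those of a model with a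
linear interaction. The square vanishes on the configurations of density `y`, so these have total
weight at most of order `exp (N 𝑝̃(y))`. For `J ≥ 0` the square can be dropped from below, so the
full normalization is at least of order `N⁻³ exp (N 𝑝̃(y))` for every `y`. There are only `N + 1`
densities, and by compactness `𝑝̃` stays a fixed amount below its maximum away from its maximizers.
-/

open scoped Nat

noncomputable section

theorem exists_forall_le_sub_of_le_infDist_isMaxOn {α : Type*} [PseudoMetricSpace α] {s : Set α}
    (hs : IsCompact s) (hne : s.Nonempty) {f : α → ℝ} (hf : ContinuousOn f s) {δ : ℝ}
    (hδ : 0 < δ) :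
    ∃ y ∈ s, ∃ ε > 0, ∀ m ∈ s, δ ≤ Metric.infDist m {x ∈ s | IsMaxOn f s x} →
      f m ≤ f y - ε := by
  obtain ⟨y, hys, hy⟩ := hs.exists_isMaxOn hne hf
  set far := s ∩ {m | δ ≤ Metric.infDist m {x ∈ s | IsMaxOn f s x}}
  have far_compact : IsCompact far :=
    hs.inter_right (isClosed_le continuous_const (Metric.continuous_infDist_pt _))
  refine ⟨y, hys, ?_⟩
  rcases far.eq_empty_or_nonempty with far_empty | far_nonempty
  · exact ⟨1, one_pos, fun m hm hd ↦ (far_empty.subset ⟨hm, hd⟩).elim⟩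
  · obtain ⟨z, ⟨hzs, hzδ⟩, hz⟩ :=
      far_compact.exists_isMaxOn far_nonempty (hf.mono Set.inter_subset_left)
    have not_max : f z < f y := by
      by_contra! hle
      exact (hδ.trans_le hzδ).ne'
        (Metric.infDist_zero_of_mem ⟨hzs, fun w hw ↦ (hy hw).trans hle⟩)
    exact ⟨f y - f z, sub_pos.2 not_max, fun m hm hd ↦ by simpa using hz ⟨hm, hd⟩⟩

lemma pow_mul_exp_neg_mul_le {x ε : ℝ} (hx : 0 ≤ x) (hε : 0 < ε) (k : ℕ) :
    x ^ k * exp (-x * ε) ≤ k ! * (2 / ε) ^ k * exp (-x * (ε / 2)) := by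
  have pow_le := pow_div_factorial_le_exp (x * (ε / 2)) (by positivity) k
  rw [div_le_iff₀ (by positivity)] at pow_le
  calc x ^ k * exp (-x * ε) = (2 / ε) ^ k * (x * (ε / 2)) ^ k * exp (-x * ε) := by
        rw [← mul_pow]
        field_simp
    _ ≤ (2 / ε) ^ k * (exp (x * (ε / 2)) * k !) * exp (-x * ε) := by gcongr
    _ = k ! * (2 / ε) ^ k * (exp (x * (ε / 2)) * exp (-x * ε)) := by ring
    _ = _ := by
        rw [← exp_add]
        ring_nf

section PartitionFunction

open Polynomial

variable {R : Type*} [CommSemiring R]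

/-- The partition function `∑_D x^{|𝓜(D)|}` of the monomer-dimer model on the complete graph with
`n` vertices and monomer activity `x`. The activity lives in any commutative semiring, so that
`x = X` gives the generating polynomial of dimer configurations by number of monomers. -/
def dimerPartition (x : R) (n : ℕ) : R := ∑ D : Dimer n, x ^ #(monomers D)

lemma eval_dimerPartition_X (x : R) (n : ℕ) :
    (dimerPartition (X : R[X]) n).eval x = dimerPartition x n := by
  simp [dimerPartition, eval_finsetSum]

lemma dimerPartition_eq_sum_perm (x : R) (n : ℕ) :
    dimerPartition x n =
      ∑ e : Equiv.Perm (Fin n) with ∀ i, e (e i) = i, x ^ #{i | e i = i} :=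
  sum_bij' (fun D _ ↦ ⟨D.1, D.1, D.2, D.2⟩) (fun e he ↦ ⟨e, (mem_filter.1 he).2⟩)
    (fun D _ ↦ mem_filter.2 ⟨mem_univ _, D.2⟩) (fun _ _ ↦ mem_univ _) (fun _ _ ↦ rfl)
    (fun _ _ ↦ Equiv.ext fun _ ↦ rfl) (fun _ _ ↦ rfl)

lemma decomposeFin_symm_zero_involutive_iff {n : ℕ} (e : Equiv.Perm (Fin n)) :
    (∀ i, Equiv.Perm.decomposeFin.symm (0, e) (Equiv.Perm.decomposeFin.symm (0, e) i) = i) ↔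
      ∀ i, e (e i) = i := by
  simp [Fin.forall_fin_succ]

lemma card_fixed_decomposeFin_symm_zero {n : ℕ} (e : Equiv.Perm (Fin n)) :
    #{i | Equiv.Perm.decomposeFin.symm (0, e) i = i} = #{i | e i = i} + 1 := by
  simp [Fin.card_filter_univ_succ]

lemma decomposeFin_symm_succ_apply_succ_eq_zero_iff {n : ℕ} {a i : Fin n}
    {e : Equiv.Perm (Fin n)} :
    Equiv.Perm.decomposeFin.symm (a.succ, e) i.succ = 0 ↔ e i = a := by
  simp [Equiv.swap_apply_eq_iff]

lemma decomposeFin_symm_succ_apply_succ_of_ne {n : ℕ} {a i : Fin n} {e : Equiv.Perm (Fin n)}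
    (h : e i ≠ a) : Equiv.Perm.decomposeFin.symm (a.succ, e) i.succ = (e i).succ := by
  rw [Equiv.Perm.decomposeFin_symm_apply_succ,
    Equiv.swap_apply_of_ne_of_ne (Fin.succ_ne_zero _) (by simpa using h)]

lemma decomposeFin_symm_succ_involutive_iff {n : ℕ} (a : Fin n) (e : Equiv.Perm (Fin n)) :
    (∀ i, Equiv.Perm.decomposeFin.symm (a.succ, e)
      (Equiv.Perm.decomposeFin.symm (a.succ, e) i) = i) ↔ (∀ i, e (e i) = i) ∧ e a = a := by
  rw [Fin.forall_fin_succ, Equiv.Perm.decomposeFin_symm_apply_zero,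
    decomposeFin_symm_succ_apply_succ_eq_zero_iff, and_comm]
  refine and_congr_left fun ha ↦ forall_congr' fun i ↦ ?_
  have e_eq_iff (j : Fin n) : e j = a ↔ j = a := by rw [← e.injective.eq_iff (a := j), ha]
  by_cases hi : i = a
  · simp [hi, ha]
  · rw [decomposeFin_symm_succ_apply_succ_of_ne ((e_eq_iff i).not.2 hi),
      decomposeFin_symm_succ_apply_succ_of_ne (by simpa only [ne_eq, e_eq_iff] using hi),
      Fin.succ_inj]

lemma card_fixed_decomposeFin_symm_succ {n : ℕ} {a : Fin n} {e : Equiv.Perm (Fin n)}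
    (ha : e a = a) :
    #{i | Equiv.Perm.decomposeFin.symm (a.succ, e) i = i} = #{i | e i = i} - 1 := by
  rw [Fin.card_filter_univ_succ, if_neg (by simp), ← card_erase_of_mem (a := a) (by simp [ha])]
  congr 1
  ext i
  by_cases hi : i = a
  · simp [hi, ha, (Fin.succ_ne_zero _).symm]
  · have hei : e i ≠ a := fun h ↦ hi (e.injective (h.trans ha.symm))
    simp [decomposeFin_symm_succ_apply_succ_of_ne hei, hi, -Equiv.Perm.decomposeFin_symm_apply_succ]

lemma dimerPartition_X_succ (n : ℕ) :
    dimerPartition (X : R[X]) (n + 1) =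
      X * dimerPartition X n + derivative (dimerPartition X n) := by
  simp only [dimerPartition_eq_sum_perm, sum_filter]
  -- Vertex `0` is either a monomer or forms a dimer with a former monomer `a`.
  rw [← Equiv.sum_comp Equiv.Perm.decomposeFin.symm, Fintype.sum_prod_type, Fin.sum_univ_succ,
    sum_comm, mul_sum, derivative_sum]
  congr! 2 with e _ e
  · simp only [decomposeFin_symm_zero_involutive_iff, card_fixed_decomposeFin_symm_zero, mul_ite,
      mul_zero, pow_succ']
  · simp only [decomposeFin_symm_succ_involutive_iff]
    by_cases he : ∀ i, e (e i) = i
    · simp only [he, implies_true, true_and, if_true, derivative_X_pow, ← sum_filter]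
      rw [sum_congr rfl fun a ha ↦ by
        rw [card_fixed_decomposeFin_symm_succ (mem_filter.1 ha).2]]
      simp
    · simp [he]

@[simp]
lemma dimerPartition_zero (x : R) : dimerPartition x 0 = 1 := by
  simp [dimerPartition_eq_sum_perm]

@[simp]
lemma dimerPartition_one (x : R) : dimerPartition x 1 = x := by
  rw [← eval_dimerPartition_X, dimerPartition_X_succ]
  simp

lemma derivative_dimerPartition_X_succ (n : ℕ) :
    derivative (dimerPartition (X : R[X]) (n + 1)) = ((n : R[X]) + 1) * dimerPartition X n := by
  induction n with
  | zero => simp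
  | succ n ih =>
    rw [dimerPartition_X_succ (n + 1), derivative_add, derivative_mul, derivative_X, ih,
      derivative_mul, dimerPartition_X_succ n]
    simp only [derivative_add, derivative_natCast, derivative_one]
    push_cast
    ring

lemma dimerPartition_add_two (x : R) (n : ℕ) :
    dimerPartition x (n + 2) =
      x * dimerPartition x (n + 1) + (n + 1) * dimerPartition x n := by
  rw [← eval_dimerPartition_X, dimerPartition_X_succ, derivative_dimerPartition_X_succ]
  simp [eval_dimerPartition_X]

lemma dimerPartition_eq_sum_config (x : R) (N : ℕ) :
    dimerPartition x N = ∑ σ : Config N, (Dcount N σ : R) * x ^ Msum σ := by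
  let monomerConfig (D : Dimer N) : Config N := fun i ↦ decide (i ∈ monomers D)
  have monomers_eq_iff (D : Dimer N) (σ : Config N) :
      monomers D = ASet σ ↔ monomerConfig D = σ := by
    simp only [Finset.ext_iff, funext_iff, monomerConfig, ASet, mem_filter, mem_univ, true_and]
    exact forall_congr' fun i ↦ by rw [@Bool.eq_iff_iff (decide _), decide_eq_true_iff]
  rw [dimerPartition, ← sum_fiberwise univ monomerConfig]
  refine sum_congr rfl fun σ _ ↦ ?_
  simp only [Dcount, monomers_eq_iff, ← nsmul_eq_mul]
  refine sum_eq_card_nsmul fun D hD ↦ ?_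
  rw [Msum, (monomers_eq_iff D σ).2 (mem_filter.1 hD).2]

lemma dimerPartition_nonneg {x : ℝ} (hx : 0 ≤ x) (n : ℕ) : 0 ≤ dimerPartition x n :=
  sum_nonneg fun _ _ ↦ pow_nonneg hx _

end PartitionFunction

section Saddle

/-- The larger root `s` of `s * (x + s) = c`. It is the saddle point of
`exp (x t + t² / 2) / t ^ c`, the integrand in Cauchy's formula for the coefficients of
`exp (x t + t² / 2)`. -/
def saddle (x c : ℝ) : ℝ := (√(x ^ 2 + 4 * c) - x) / 2

variable {x c : ℝ}

lemma saddle_mul_add_saddle (hc : 0 ≤ c) : saddle x c * (x + saddle x c) = c := by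
  have := sq_sqrt (show 0 ≤ x ^ 2 + 4 * c by positivity)
  unfold saddle
  linarith

lemma saddle_pos (hc : 0 < c) : 0 < saddle x c := by
  have : x < √(x ^ 2 + 4 * c) := lt_sqrt_of_sq_lt (by linarith)
  unfold saddle
  linarith

lemma saddle_zero_right (hx : 0 ≤ x) : saddle x 0 = 0 := by
  simp [saddle, sqrt_sq hx]

lemma saddle_mono : Monotone (saddle x) := fun c d hcd ↦ by
  unfold saddle
  gcongr

lemma saddle_mul_sq {a : ℝ} (ha : 0 ≤ a) (x c : ℝ) :
    saddle (a * x) (a ^ 2 * c) = a * saddle x c := by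
  have : (a * x) ^ 2 + 4 * (a ^ 2 * c) = a ^ 2 * (x ^ 2 + 4 * c) := by ring
  rw [saddle, saddle, this, sqrt_mul (sq_nonneg a), sqrt_sq ha]
  ring

lemma le_mul_saddle_add_one_add_sq (hx : 0 ≤ x) (hc : 0 ≤ c) :
    c ≤ x * saddle x (c + 1) + saddle x c ^ 2 :=
  calc c = x * saddle x c + saddle x c ^ 2 := by
        linear_combination -saddle_mul_add_saddle (x := x) hc
    _ ≤ _ := by
        gcongr
        exact saddle_mono (le_add_of_nonneg_right zero_le_one)

/-- The Cauchy estimate `n! t⁻ⁿ exp (x t + t² / 2)`, at radius `t`, for `n!` times the `n`-th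
coefficient of the exponential generating function `exp (x t + t² / 2)` of `dimerPartition x`. -/
def cauchyEstimate (x : ℝ) (n : ℕ) (t : ℝ) : ℝ := n ! * exp (x * t + t ^ 2 / 2) / t ^ n

lemma mul_cauchyEstimate_succ {t : ℝ} (ht : t ≠ 0) (n : ℕ) :
    t * cauchyEstimate x (n + 1) t = (n + 1) * cauchyEstimate x n t := by
  simp only [cauchyEstimate, Nat.factorial_succ, Nat.cast_mul, Nat.cast_succ, pow_succ]
  field_simp

/-- The best Cauchy estimate, taken at the saddle point. -/
def saddleEstimate (x : ℝ) (n : ℕ) : ℝ := cauchyEstimate x n (saddle x n)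

lemma saddleEstimate_zero (hx : 0 ≤ x) : saddleEstimate x 0 = 1 := by
  simp [saddleEstimate, cauchyEstimate, saddle_zero_right hx]

lemma saddleEstimate_nonneg (hx : 0 ≤ x) (n : ℕ) : 0 ≤ saddleEstimate x n := by
  have : 0 ≤ saddle x n := saddle_zero_right hx ▸ saddle_mono n.cast_nonneg
  unfold saddleEstimate cauchyEstimate
  positivity

lemma div_saddle_pow_le {n : ℕ} (hn : n ≠ 0) {t : ℝ} (ht : 0 ≤ t) :
    (t / saddle x n) ^ n ≤
      exp (x * t + t ^ 2 / 2 - (x * saddle x n + saddle x n ^ 2 / 2)) := by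
  have hs : 0 < saddle x n := saddle_pos (by positivity)
  have saddle_eq := saddle_mul_add_saddle (x := x) n.cast_nonneg
  set s := saddle x n
  have exponent_eq : n * (t / s - 1) = (x + s) * (t - s) := by
    rw [← saddle_eq]
    field_simp
  calc (t / s) ^ n ≤ exp (t / s - 1) ^ n := by
        gcongr
        linarith [add_one_le_exp (t / s - 1)]
    _ = exp ((x + s) * (t - s)) := by rw [← exp_nat_mul, exponent_eq]
    _ ≤ _ := exp_le_exp.2 (by linarith [sq_nonneg (t - s)])

lemma saddleEstimate_le (hx : 0 ≤ x) (n : ℕ) {t : ℝ} (ht : 0 < t) :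
    saddleEstimate x n ≤ cauchyEstimate x n t := by
  rcases eq_or_ne n 0 with rfl | hn
  · rw [saddleEstimate_zero hx]
    simpa [cauchyEstimate] using (by positivity : 0 ≤ x * t + t ^ 2 / 2)
  · have hs : 0 < saddle x n := saddle_pos (by positivity)
    have pow_le := div_saddle_pow_le (x := x) hn ht.le
    rw [div_pow, exp_sub, div_le_div_iff₀ (by positivity) (exp_pos _)] at pow_le
    rw [saddleEstimate, cauchyEstimate, cauchyEstimate,
      div_le_div_iff₀ (by positivity) (by positivity), mul_assoc, mul_assoc]
    gcongr ?_ * ?_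
    linarith

theorem dimerPartition_le_saddleEstimate (hx : 0 ≤ x) (n : ℕ) :
    dimerPartition x n ≤ saddleEstimate x n := by
  induction n using Nat.twoStepInduction with
  | zero => simp [saddleEstimate_zero hx]
  | one =>
    have hs : 0 < saddle x 1 := saddle_pos one_pos
    have saddle_eq := saddle_mul_add_saddle (x := x) zero_le_one
    have one_le_exp : 1 ≤ exp (x * saddle x 1 + saddle x 1 ^ 2 / 2) := one_le_exp (by positivity)
    simp only [dimerPartition_one, saddleEstimate, cauchyEstimate, Nat.factorial_one, Nat.cast_one,
      one_mul, pow_one]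
    rw [le_div_iff₀ hs]
    linarith [sq_nonneg (saddle x 1)]
  | more n ih₀ ih₁ =>
    have hs : 0 < saddle x (n + 2 : ℕ) := saddle_pos (by positivity)
    have saddle_eq := saddle_mul_add_saddle (x := x) (n + 2).cast_nonneg
    rw [saddleEstimate]
    set s := saddle x (n + 2 : ℕ)
    have bound₀ := ih₀.trans (saddleEstimate_le hx n hs)
    have bound₁ := ih₁.trans (saddleEstimate_le hx (n + 1) hs)
    have rec₀ := mul_cauchyEstimate_succ (x := x) hs.ne' n
    have rec₁ := mul_cauchyEstimate_succ (x := x) hs.ne' (n + 1)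
    push_cast at saddle_eq rec₁
    calc dimerPartition x (n + 2)
        = x * dimerPartition x (n + 1) + (n + 1) * dimerPartition x n := dimerPartition_add_two x n
      _ ≤ x * cauchyEstimate x (n + 1) s + (n + 1) * cauchyEstimate x n s := by gcongr
      _ = (x + s) * cauchyEstimate x (n + 1) s := by rw [← rec₀]; ring
      _ = cauchyEstimate x (n + 2) s := by
        refine mul_left_cancel₀ hs.ne' ?_
        linear_combination cauchyEstimate x (n + 1) s * saddle_eq - rec₁

lemma mul_saddleEstimate_succ_le (hx : 0 ≤ x) (n : ℕ) {t : ℝ} (ht : 0 < t) :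
    t * saddleEstimate x (n + 1) ≤ (n + 1) * cauchyEstimate x n t :=
  (mul_le_mul_of_nonneg_left (saddleEstimate_le hx (n + 1) ht) ht.le).trans_eq
    (mul_cauchyEstimate_succ ht.ne' n)

lemma mul_saddleEstimate_add_two_le (hx : 0 ≤ x) {n : ℕ} (hn : n ≠ 0) :
    n * saddleEstimate x (n + 2) ≤
      (n + 2) * (x * saddleEstimate x (n + 1) + (n + 1) * saddleEstimate x n) := by
  have hs₀ : 0 < saddle x n := saddle_pos (by positivity)
  have hs₁ : 0 < saddle x (n + 1 : ℕ) := saddle_pos (by positivity)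
  have bound₁ : saddle x (n + 1 : ℕ) * saddleEstimate x (n + 2) ≤
      ((n + 1 : ℕ) + 1) * saddleEstimate x (n + 1) := mul_saddleEstimate_succ_le hx (n + 1) hs₁
  have bound₀ : saddle x n ^ 2 * saddleEstimate x (n + 2) ≤
      (n + 2) * ((n + 1) * saddleEstimate x n) := by
    calc saddle x n ^ 2 * saddleEstimate x (n + 2)
        = saddle x n * (saddle x n * saddleEstimate x (n + 2)) := by ring
      _ ≤ saddle x n * (((n + 1 : ℕ) + 1) * cauchyEstimate x (n + 1) (saddle x n)) := by
          gcongr saddle x n * ?_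
          exact mul_saddleEstimate_succ_le hx (n + 1) hs₀
      _ = _ := by
          rw [saddleEstimate.eq_def x n]
          push_cast
          linear_combination (n + 2) * mul_cauchyEstimate_succ (x := x) hs₀.ne' n
  push_cast at bound₁
  calc n * saddleEstimate x (n + 2)
      ≤ (x * saddle x (n + 1) + saddle x n ^ 2) * saddleEstimate x (n + 2) := by
        gcongr
        · exact saddleEstimate_nonneg hx _
        · exact le_mul_saddle_add_one_add_sq hx n.cast_nonneg
    _ ≤ _ := by linarith [mul_le_mul_of_nonneg_left bound₁ hx]

lemma mul_saddleEstimate_add_two_le_mul_dimerPartition (hx : 0 ≤ x) {n : ℕ} (hn : n ≠ 0) {K : ℝ}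
    (h₀ : saddleEstimate x n ≤ K * dimerPartition x n)
    (h₁ : saddleEstimate x (n + 1) ≤ K * dimerPartition x (n + 1)) :
    n * saddleEstimate x (n + 2) ≤ (n + 2) * (K * dimerPartition x (n + 2)) :=
  calc n * saddleEstimate x (n + 2)
      ≤ (n + 2) * (x * saddleEstimate x (n + 1) + (n + 1) * saddleEstimate x n) :=
        mul_saddleEstimate_add_two_le hx hn
    _ ≤ (n + 2) * (x * (K * dimerPartition x (n + 1)) + (n + 1) * (K * dimerPartition x n)) := by
        gcongr
    _ = _ := by
        rw [dimerPartition_add_two]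
        ring

-- The exponential factor comes from the Cauchy estimates for `n = 1, 2` at radius `x⁻¹`.
theorem saddleEstimate_le_mul_dimerPartition (hx : 0 < x) {n : ℕ} (hn : n ≠ 0) :
    saddleEstimate x n ≤ exp (1 + x⁻¹ ^ 2 / 2) * n ^ 3 * dimerPartition x n := by
  set C := exp (1 + x⁻¹ ^ 2 / 2) with hC
  have hCpos : 0 < C := exp_pos _
  have le_at_inv (n : ℕ) : saddleEstimate x n ≤ n ! * C * x ^ n := by
    simpa [cauchyEstimate, hx.ne', hC] using saddleEstimate_le hx.le n (inv_pos.2 hx)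
  induction n using Nat.strong_induction_on with | h n ih =>
  match n with
  | 1 => simpa using le_at_inv 1
  | 2 =>
    have partition_two : dimerPartition x 2 = x ^ 2 + 1 := by
      simpa [sq] using dimerPartition_add_two x 0
    calc saddleEstimate x 2 ≤ 2 ! * C * x ^ 2 := le_at_inv 2
      _ ≤ C * 2 ^ 3 * (x ^ 2 + 1) := by
        rw [Nat.factorial_two, Nat.cast_two]
        linarith [mul_nonneg hCpos.le (sq_nonneg x)]
      _ = _ := by rw [partition_two, Nat.cast_two]
  | n + 3 =>
    have partition_nonneg (k : ℕ) : 0 ≤ dimerPartition x k := dimerPartition_nonneg hx.le k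
    have ih₁ : saddleEstimate x (n + 1) ≤ C * (n + 2) ^ 3 * dimerPartition x (n + 1) := by
      refine (ih (n + 1) (by lia) n.succ_ne_zero).trans ?_
      have := partition_nonneg (n + 1)
      push_cast
      gcongr
      norm_num
    have ih₂ : saddleEstimate x (n + 2) ≤ C * (n + 2) ^ 3 * dimerPartition x (n + 2) := by
      exact_mod_cast ih (n + 2) (by lia) (n + 1).succ_ne_zero
    have step := mul_saddleEstimate_add_two_le_mul_dimerPartition hx.le n.succ_ne_zero ih₁ ih₂
    have cube_le : ((n : ℝ) + 3) * (n + 2) ^ 3 ≤ (n + 1) * (n + 3) ^ 3 := by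
      have := n.cast_nonneg (α := ℝ)
      nlinarith [pow_nonneg this 2, pow_nonneg this 3]
    have := mul_le_mul_of_nonneg_left cube_le (mul_nonneg hCpos.le (partition_nonneg (n + 3)))
    refine le_of_mul_le_mul_left ?_ (show (0 : ℝ) < n + 1 by positivity)
    push_cast at step ⊢
    linarith

end Saddle

section Pressure

/-- The limiting pressure of the monomer-dimer model without imitation, at monomer activity
`√N exp ξ`. -/
def pressure (ξ : ℝ) : ℝ := -(1 - gFun ξ + log (1 - gFun ξ)) / 2

/-- The configuration-independent factor `N! e^N N^{-N/2}` in the partition function at activity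
`√N exp ξ`. -/
def pressurePrefactor (N : ℕ) : ℝ := N ! * exp N / √N ^ N

lemma pressurePrefactor_pos (N : ℕ) : 0 < pressurePrefactor N := by
  rcases N.eq_zero_or_pos with rfl | hN
  · simp [pressurePrefactor]
  · unfold pressurePrefactor
    positivity

lemma ptilde_eq (J h m : ℝ) : ptilde J h m = -J * m ^ 2 + pressure (tauFun J h m) := by
  rw [ptilde, pressure]
  ring

lemma gFun_eq (ξ : ℝ) : gFun ξ = exp ξ * saddle (exp ξ) 1 := by
  have exp_two : exp (2 * ξ) = exp ξ ^ 2 := by exact_mod_cast exp_nat_mul ξ 2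
  have exp_four : exp (4 * ξ) = exp ξ ^ 4 := by exact_mod_cast exp_nat_mul ξ 4
  have : exp ξ ^ 4 + 4 * exp ξ ^ 2 = exp ξ ^ 2 * (exp ξ ^ 2 + 4 * 1) := by ring
  rw [gFun, exp_two, exp_four, this, sqrt_mul (by positivity), sqrt_sq (exp_pos ξ).le, saddle]
  ring

lemma one_sub_gFun (ξ : ℝ) : 1 - gFun ξ = saddle (exp ξ) 1 ^ 2 := by
  linarith [gFun_eq ξ, saddle_mul_add_saddle (x := exp ξ) zero_le_one]

lemma continuous_pressure : Continuous pressure := by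
  have gFun_ne_one (ξ : ℝ) : 1 - gFun ξ ≠ 0 := by
    rw [one_sub_gFun]
    exact (pow_pos (saddle_pos one_pos) 2).ne'
  have continuous_gFun : Continuous gFun := by unfold gFun; fun_prop
  unfold pressure
  fun_prop (disch := assumption)

lemma continuous_ptilde (J h : ℝ) : Continuous (ptilde J h) := by
  have := continuous_pressure
  simp only [funext (ptilde_eq J h), tauFun]
  fun_prop

lemma saddleEstimate_sqrt_mul_exp (N : ℕ) (ξ : ℝ) :
    saddleEstimate (√N * exp ξ) N = pressurePrefactor N * exp (N * pressure ξ) := by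
  have sq_sqrt_N : √(N : ℝ) ^ 2 = N := sq_sqrt N.cast_nonneg
  have saddle_scaled : saddle (√N * exp ξ) N = √N * saddle (exp ξ) 1 := by
    simpa [sq_sqrt_N] using saddle_mul_sq (sqrt_nonneg N) (exp ξ) 1
  have hu : 0 < saddle (exp ξ) 1 := saddle_pos one_pos
  have saddle_eq := saddle_mul_add_saddle (x := exp ξ) zero_le_one
  rw [saddleEstimate, cauchyEstimate, pressurePrefactor, saddle_scaled, pressure, one_sub_gFun]
  set u := saddle (exp ξ) 1
  have pow_eq : u ^ N = exp (N * log u) := by rw [exp_nat_mul, exp_log hu]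
  have exp_eq : exp (√N * exp ξ * (√N * u) + (√N * u) ^ 2 / 2) =
      exp N * exp (N * (-(u ^ 2 + log (u ^ 2)) / 2)) * u ^ N := by
    rw [pow_eq, ← exp_add, ← exp_add, log_pow]
    congr 1
    push_cast
    linear_combination (exp ξ * u + u ^ 2 / 2) * sq_sqrt_N + N * saddle_eq
  rw [exp_eq, mul_pow]
  field_simp

end Pressure

section CurieWeiss

variable {N : ℕ} {J h : ℝ}

lemma wConf_nonneg (σ : Config N) : 0 ≤ wConf N J h σ := by
  unfold wConf
  positivity

lemma mConf_mem_Icc (σ : Config N) : mConf σ ∈ Set.Icc (0 : ℝ) 1 := by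
  have : Msum σ ≤ N := by simpa [Msum] using (ASet σ).card_le_univ
  exact ⟨by unfold mConf; positivity, div_le_one_of_le₀ (by exact_mod_cast this) N.cast_nonneg⟩

lemma card_image_mConf_le (s : Finset (Config N)) : #(s.image mConf) ≤ N + 1 := by
  have subset : s.image mConf ⊆ (range (N + 1)).image fun k : ℕ ↦ (k : ℝ) / N := by
    refine image_subset_iff.2 fun σ _ ↦ mem_image.2 ⟨Msum σ, mem_range.2 ?_, rfl⟩
    simpa [Msum, Nat.lt_succ_iff] using (ASet σ).card_le_univ
  simpa using (card_le_card subset).trans card_image_le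

lemma wConf_eq_linearization (hN : N ≠ 0) (y : ℝ) (σ : Config N) :
    wConf N J h σ = exp (N * (-J * y ^ 2)) * exp (N * (J * (mConf σ - y) ^ 2)) *
      (Dcount N σ * (√N * exp (tauFun J h y)) ^ Msum σ) := by
  have hN₀ : (0 : ℝ) < N := by positivity
  have Msum_eq : (Msum σ : ℝ) = N * mConf σ := by
    rw [mConf]
    field_simp
  have sqrt_eq : √(N : ℝ) = exp (log N / 2) := by
    rw [← log_sqrt hN₀.le, exp_log (sqrt_pos.2 hN₀)]
  have pow_eq : (√N * exp (tauFun J h y)) ^ Msum σ =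
      exp (N * mConf σ * (log N / 2 + tauFun J h y)) := by
    rw [sqrt_eq, ← exp_add, ← exp_nat_mul, Msum_eq]
  rw [pow_eq, mul_left_comm, ← exp_add, ← exp_add, wConf, bIMD, tauFun]
  ring_nf

lemma exp_mul_dimerPartition_le_sum_wConf (hN : N ≠ 0) (hJ : 0 ≤ J) (y : ℝ) :
    exp (N * (-J * y ^ 2)) * dimerPartition (√N * exp (tauFun J h y)) N ≤
      ∑ σ : Config N, wConf N J h σ := by
  rw [dimerPartition_eq_sum_config, mul_sum]
  gcongr with σ
  rw [wConf_eq_linearization hN y, mul_right_comm]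
  exact le_mul_of_one_le_right (by positivity) (one_le_exp (by positivity))

lemma sum_wConf_fiber_le (hN : N ≠ 0) (m : ℝ) :
    ∑ σ : Config N with mConf σ = m, wConf N J h σ ≤
      exp (N * (-J * m ^ 2)) * dimerPartition (√N * exp (tauFun J h m)) N := by
  rw [dimerPartition_eq_sum_config, mul_sum]
  refine (sum_le_sum fun σ hσ ↦ ?_).trans
    (sum_le_sum_of_subset_of_nonneg (subset_univ _) fun σ _ _ ↦ by positivity)
  simp [wConf_eq_linearization hN m, (mem_filter.1 hσ).2]

theorem sum_wConf_fiber_le_exp_ptilde (hN : N ≠ 0) (m : ℝ) :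
    ∑ σ : Config N with mConf σ = m, wConf N J h σ ≤
      pressurePrefactor N * exp (N * ptilde J h m) :=
  calc _ ≤ exp (N * (-J * m ^ 2)) * dimerPartition (√N * exp (tauFun J h m)) N :=
        sum_wConf_fiber_le hN m
    _ ≤ exp (N * (-J * m ^ 2)) * saddleEstimate (√N * exp (tauFun J h m)) N := by
        gcongr
        exact dimerPartition_le_saddleEstimate (by positivity) N
    _ = _ := by
        rw [saddleEstimate_sqrt_mul_exp, ptilde_eq, mul_add, exp_add]
        ring

theorem exp_ptilde_le_sum_wConf (hN : N ≠ 0) (hJ : 0 ≤ J) (y : ℝ) :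
    pressurePrefactor N * exp (N * ptilde J h y) ≤
      exp (1 + (exp (tauFun J h y))⁻¹ ^ 2 / 2) * N ^ 3 * ∑ σ : Config N, wConf N J h σ := by
  set a := exp (tauFun J h y)
  have ha : 0 < a := exp_pos _
  have one_le_sqrt : 1 ≤ √(N : ℝ) := by simpa [Nat.one_le_iff_ne_zero] using hN
  have le_activity : a ≤ √N * a := le_mul_of_one_le_left ha.le one_le_sqrt
  have hZ := dimerPartition_nonneg (ha.le.trans le_activity) N
  calc pressurePrefactor N * exp (N * ptilde J h y)
      = exp (N * (-J * y ^ 2)) * saddleEstimate (√N * a) N := by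
        rw [saddleEstimate_sqrt_mul_exp, ptilde_eq, mul_add, exp_add]
        ring
    _ ≤ exp (N * (-J * y ^ 2)) *
          (exp (1 + (√N * a)⁻¹ ^ 2 / 2) * N ^ 3 * dimerPartition (√N * a) N) := by
        gcongr
        exact saddleEstimate_le_mul_dimerPartition (ha.trans_le le_activity) hN
    _ ≤ exp (N * (-J * y ^ 2)) *
          (exp (1 + a⁻¹ ^ 2 / 2) * N ^ 3 * dimerPartition (√N * a) N) := by gcongr
    _ = exp (1 + a⁻¹ ^ 2 / 2) * N ^ 3 *
          (exp (N * (-J * y ^ 2)) * dimerPartition (√N * a) N) := by ring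
    _ ≤ _ := by
        gcongr
        exact exp_mul_dimerPartition_le_sum_wConf hN hJ y

lemma sum_indicator_wConf_le (hN : N ≠ 0) {A : Config N → Prop} {M : ℝ}
    (hA : ∀ σ, A σ → ptilde J h (mConf σ) ≤ M) :
    ∑ σ, Set.indicator {σ | A σ} (wConf N J h) σ ≤
      (N + 1) * (pressurePrefactor N * exp (N * M)) := by
  classical
  have hprefactor := pressurePrefactor_pos N
  have fiber_le : ∀ m ∈ ({σ | A σ} : Finset (Config N)).image mConf,
      ∑ σ ∈ ({σ | A σ} : Finset (Config N)) with mConf σ = m, wConf N J h σ ≤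
        pressurePrefactor N * exp (N * M) := by
    intro m hm
    obtain ⟨τ, hτ, rfl⟩ := mem_image.1 hm
    calc _ ≤ ∑ σ with mConf σ = mConf τ, wConf N J h σ :=
          sum_le_sum_of_subset_of_nonneg (filter_subset_filter _ (subset_univ _))
            fun σ _ _ ↦ wConf_nonneg σ
      _ ≤ pressurePrefactor N * exp (N * ptilde J h (mConf τ)) :=
          sum_wConf_fiber_le_exp_ptilde hN _
      _ ≤ _ := by
          gcongr
          exact hA τ (mem_filter.1 hτ).2
  calc ∑ σ, Set.indicator {σ | A σ} (wConf N J h) σ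
      = ∑ σ with A σ, wConf N J h σ := by simp [sum_filter, Set.indicator_apply]
    _ = ∑ m ∈ ({σ | A σ} : Finset (Config N)).image mConf,
          ∑ σ ∈ ({σ | A σ} : Finset (Config N)) with mConf σ = m, wConf N J h σ :=
        (sum_fiberwise_of_maps_to (fun σ hσ ↦ mem_image_of_mem _ hσ) _).symm
    _ ≤ #(({σ | A σ} : Finset (Config N)).image mConf) •
          (pressurePrefactor N * exp (N * M)) := sum_le_card_nsmul _ _ _ fiber_le
    _ ≤ _ := by
        rw [nsmul_eq_mul]
        gcongr
        exact_mod_cast card_image_mConf_le _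

theorem probConf_le_of_ptilde_le (hN : N ≠ 0) (hJ : 0 ≤ J) {A : Config N → Prop} {y ε : ℝ}
    (hA : ∀ σ, A σ → ptilde J h (mConf σ) ≤ ptilde J h y - ε) :
    probConf N J h A ≤
      (N + 1) * (exp (1 + (exp (tauFun J h y))⁻¹ ^ 2 / 2) * N ^ 3) * exp (-N * ε) := by
  set C := exp (1 + (exp (tauFun J h y))⁻¹ ^ 2 / 2)
  have lower := exp_ptilde_le_sum_wConf (h := h) hN hJ y
  have hZ : 0 < ∑ σ : Config N, wConf N J h σ :=
    pos_of_mul_pos_right ((mul_pos (pressurePrefactor_pos N) (exp_pos _)).trans_le lower)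
      (by positivity)
  rw [probConf, div_le_iff₀ hZ]
  calc _ ≤ (N + 1) * (pressurePrefactor N * exp (N * (ptilde J h y - ε))) :=
        sum_indicator_wConf_le hN hA
    _ = (N + 1) * exp (-N * ε) * (pressurePrefactor N * exp (N * ptilde J h y)) := by
        rw [mul_sub, sub_eq_add_neg, exp_add, ← neg_mul]
        ring
    _ ≤ (N + 1) * exp (-N * ε) * (C * N ^ 3 * ∑ σ : Config N, wConf N J h σ) := by gcongr
    _ = _ := by ring

end CurieWeiss

end

/-- Large-deviation concentration of the magnetization near the set `O`
of maximizers of `𝑝̃`: for every `δ > 0` there are `η > 0` and `K` with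
`ℙ(d(m(σ), O) ≥ δ) ≤ K e^{-Nη}` for all `N ≥ 1`. -/
theorem stmt9 (J h : ℝ) (hJ : 0 ≤ J) (δ : ℝ) (hδ : 0 < δ) :
    ∃ η : ℝ, 0 < η ∧ ∃ K : ℝ, ∀ N : ℕ, 1 ≤ N →
      probConf N J h (fun σ => δ ≤ Metric.infDist (mConf σ) (maxSet J h))
        ≤ K * Real.exp (-(N:ℝ) * η) := by
  obtain ⟨y, -, ε, hε, gap⟩ := exists_forall_le_sub_of_le_infDist_isMaxOn isCompact_Icc
    (Set.nonempty_Icc.2 zero_le_one) (continuous_ptilde J h).continuousOn hδ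
  set C := exp (1 + (exp (tauFun J h y))⁻¹ ^ 2 / 2)
  refine ⟨ε / 2, half_pos hε, 2 * C * (Nat.factorial 4 * (2 / ε) ^ 4), fun N hN ↦ ?_⟩
  have one_le_N : (1 : ℝ) ≤ N := by exact_mod_cast hN
  calc probConf N J h (fun σ ↦ δ ≤ Metric.infDist (mConf σ) (maxSet J h))
      ≤ (N + 1) * (C * N ^ 3) * exp (-N * ε) :=
        probConf_le_of_ptilde_le (by lia) hJ fun σ ↦ gap _ (mConf_mem_Icc σ)
    _ ≤ (N + N) * (C * N ^ 3) * exp (-N * ε) := by gcongr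
    _ = 2 * C * (N ^ 4 * exp (-N * ε)) := by ring
    _ ≤ 2 * C * (Nat.factorial 4 * (2 / ε) ^ 4 * exp (-N * (ε / 2))) := by
        gcongr 2 * C * ?_
        exact pow_mul_exp_neg_mul_le N.cast_nonneg hε 4
    _ = _ := by ring
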